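/- There is a universal constant C ∈ (0,∞) such that for every p, q ∈ [1,∞), every Banach space (X,‖·‖_X), and every smooth compactly supported f : ℍ(ℝ) → X, (∫₀^∞ t^{q/2−1} ‖Q_t * f‖_{L_p(ℍ(ℝ),X)}^q dt)^{1/q} ≤ C (∫₀^∞ t^{q−1} ‖Q_t * ∇_ℍ f‖_{L_p(ℍ(ℝ),ℓ_p²(X))}^q dt)^{1/q}. -/

import Mathlib

open MeasureTheory

/-- The real Heisenberg group `ℍ(ℝ)`, identified with `ℝ³`; the Lebesgue measure
(`volume`) is a Haar measure for the Heisenberg group structure. -/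
abbrev HR : Type := ℝ × ℝ × ℝ

namespace HR

/-- Right translation by the central element `c^t`: `h ↦ h·c^t`. -/
def vmul (t : ℝ) (h : HR) : HR := (h.1, h.2.1, h.2.2 + t)

/-- The Poisson kernel `P_t(u) = t/(π(t²+u²))` on `ℝ`. -/
noncomputable def Pker (t u : ℝ) : ℝ := t / (Real.pi * (t ^ 2 + u ^ 2))

/-- `Q_t(u) = ∂P_t/∂t(u) = (u²−t²)/(π(t²+u²)²)`. -/
noncomputable def Qker (t u : ℝ) : ℝ := (u ^ 2 - t ^ 2) / (Real.pi * (t ^ 2 + u ^ 2) ^ 2)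

variable {X : Type*} [NormedAddCommGroup X] [NormedSpace ℝ X]

/-- Convolution of a kernel `ψ : ℝ → ℝ` with `g : ℍ(ℝ) → X` along the center:
`(ψ*g)(x,y,z) = ∫_ℝ ψ(u) g(x,y,z−u) du`. -/
noncomputable def conv (ψ : ℝ → ℝ) (g : HR → X) (h : HR) : X :=
  ∫ u : ℝ, ψ u • g (h.1, h.2.1, h.2.2 - u)

/-- The left-invariant horizontal derivative `∂_a f = ∂f/∂x`. -/
noncomputable def da (f : HR → X) (h : HR) : X := fderiv ℝ f h (1, 0, 0)

/-- The left-invariant horizontal derivative `∂_b f = ∂f/∂y + x·∂f/∂z`. -/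
noncomputable def db (f : HR → X) (h : HR) : X :=
  fderiv ℝ f h (0, 1, 0) + h.1 • fderiv ℝ f h (0, 0, 1)

end HR

/-
The commutator of `a^s` and `b^s` is the central element `c^(s²)`, so translating a function `g` by
`c^u` changes it in `L_p` by at most `2 √|u|` times the norm of its horizontal gradient. Averaging
over `u` against the Poisson kernel bounds `P_t * g - g` in the same way, with `√|u|` replaced by a
multiple of `√t`. For `g = Q_t * f` the semigroup law `P_t * Q_t = Q_{2t}` turns this into
`‖Q_t * f‖ ≤ ‖Q_{2t} * f‖ + C √t ‖Q_t * ∇f‖`, which telescopes over the scales `2^k t` because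
`Q_t * f` tends to zero. In the weighted `L_q` space, Minkowski's inequality bounds the
resulting sum by a geometric series, since dilating by `2^k` contributes a factor `2^(-k/2)`.
-/

section Minkowski

open Function ENNReal

variable {α β : Type*} [MeasurableSpace α] [MeasurableSpace β] {ν : Measure α} {μ : Measure β}

-- Hölder's inequality applied to `G = (G ^ p * w ^ (1 - p)) ^ (1 / p) * w ^ (1 - 1 / p)`.
theorem rpow_lintegral_le_of_weight {p : ℝ} (hp : 1 ≤ p) {G w : α → ℝ≥0∞} (hG : Measurable G)
    (hw : Measurable w) (hw_zero : ∀ u, w u ≠ 0) (hw_top : ∀ᵐ u ∂ν, w u ≠ ∞) :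
    (∫⁻ u, G u ∂ν) ^ p ≤ (∫⁻ u, G u ^ p * w u ^ (1 - p) ∂ν) * (∫⁻ u, w u ∂ν) ^ (p - 1) := by
  have hp0 : 0 < p := one_pos.trans_le hp
  have hfactor : ∫⁻ u, G u ∂ν =
      ∫⁻ u, (G u ^ p * w u ^ (1 - p)) ^ (1 / p) * w u ^ (1 - 1 / p) ∂ν := by
    refine lintegral_congr_ae ?_
    filter_upwards [hw_top] with u hu
    rw [ENNReal.mul_rpow_of_nonneg _ _ (by positivity), ← ENNReal.rpow_mul, ← ENNReal.rpow_mul,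
      mul_one_div_cancel hp0.ne', ENNReal.rpow_one, mul_assoc,
      ← ENNReal.rpow_add _ _ (hw_zero u) hu, sub_mul, mul_one_div_cancel hp0.ne', one_mul,
      sub_add_sub_cancel, sub_self, ENNReal.rpow_zero, mul_one]
  have hholder := lintegral_mul_norm_pow_le (μ := ν)
    ((hG.pow_const p).mul (hw.pow_const (1 - p))).aemeasurable hw.aemeasurable
    (p := 1 / p) (q := 1 - 1 / p) (by positivity)
    (sub_nonneg.2 ((div_le_one hp0).2 hp)) (add_sub_cancel _ _)
  calc (∫⁻ u, G u ∂ν) ^ p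
      ≤ ((∫⁻ u, G u ^ p * w u ^ (1 - p) ∂ν) ^ (1 / p) * (∫⁻ u, w u ∂ν) ^ (1 - 1 / p)) ^ p := by
        rw [hfactor]; exact ENNReal.rpow_le_rpow hholder hp0.le
    _ = _ := by
        rw [ENNReal.mul_rpow_of_nonneg _ _ hp0.le, ← ENNReal.rpow_mul, ← ENNReal.rpow_mul,
          one_div_mul_cancel hp0.ne', ENNReal.rpow_one, sub_mul, one_mul,
          one_div_mul_cancel hp0.ne']

theorem lintegral_rpow_lintegral_le_of_weight [SFinite ν] [SFinite μ] {p : ℝ} (hp : 1 ≤ p)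
    {G : α → β → ℝ≥0∞} (hG : Measurable (uncurry G)) {w : α → ℝ≥0∞} (hw : Measurable w)
    (hw_zero : ∀ u, w u ≠ 0) (hw_top : ∀ᵐ u ∂ν, w u ≠ ∞)
    (hGw : ∀ u, ∫⁻ h, G u h ^ p ∂μ ≤ w u ^ p) :
    ∫⁻ h, (∫⁻ u, G u h ∂ν) ^ p ∂μ ≤ (∫⁻ u, w u ∂ν) ^ p := by
  have hGp : Measurable (uncurry fun u h => G u h ^ p * w u ^ (1 - p)) :=
    (hG.pow_const p).mul ((hw.comp measurable_fst).pow_const _)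
  calc ∫⁻ h, (∫⁻ u, G u h ∂ν) ^ p ∂μ
      ≤ ∫⁻ h, (∫⁻ u, G u h ^ p * w u ^ (1 - p) ∂ν) * (∫⁻ u, w u ∂ν) ^ (p - 1) ∂μ :=
        lintegral_mono fun h =>
          rpow_lintegral_le_of_weight hp hG.of_uncurry_right hw hw_zero hw_top
    _ = (∫⁻ u, ∫⁻ h, G u h ^ p * w u ^ (1 - p) ∂μ ∂ν) * (∫⁻ u, w u ∂ν) ^ (p - 1) := by
        rw [lintegral_lintegral_swap hGp.aemeasurable]
        exact lintegral_mul_const _ hGp.lintegral_prod_left'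
    _ ≤ (∫⁻ u, w u ∂ν) * (∫⁻ u, w u ∂ν) ^ (p - 1) := by
        gcongr ?_ * _
        refine lintegral_mono_ae ?_
        filter_upwards [hw_top] with u hu
        calc ∫⁻ h, G u h ^ p * w u ^ (1 - p) ∂μ
            = (∫⁻ h, G u h ^ p ∂μ) * w u ^ (1 - p) :=
              lintegral_mul_const _ (hG.of_uncurry_left.pow_const p)
          _ ≤ w u ^ p * w u ^ (1 - p) := by gcongr; exact hGw u
          _ = w u := by
              rw [← ENNReal.rpow_add _ _ (hw_zero u) hu, add_sub_cancel, ENNReal.rpow_one]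
    _ = (∫⁻ u, w u ∂ν) ^ p := by
        nth_rw 1 [← ENNReal.rpow_one (∫⁻ u, w u ∂ν)]
        rw [← ENNReal.rpow_add_of_nonneg _ _ zero_le_one (sub_nonneg.2 hp), add_sub_cancel]

theorem lintegral_Lp_lintegral_le [SigmaFinite ν] [SFinite μ] {p : ℝ} (hp : 1 ≤ p)
    {G : α → β → ℝ≥0∞} (hG : Measurable (uncurry G)) :
    (∫⁻ h, (∫⁻ u, G u h ∂ν) ^ p ∂μ) ^ (1 / p) ≤ ∫⁻ u, (∫⁻ h, G u h ^ p ∂μ) ^ (1 / p) ∂ν := by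
  have hp0 : 0 < p := one_pos.trans_le hp
  have hnorm : Measurable fun u => (∫⁻ h, G u h ^ p ∂μ) ^ (1 / p) :=
    (hG.pow_const p).lintegral_prod_right'.pow_const _
  -- Perturbing by an everywhere positive `v` of small integral makes the norms admissible weights.
  refine ENNReal.le_of_forall_pos_le_add fun ε hε hfin => ?_
  obtain ⟨v, hv_pos, hv, hv_lt⟩ := exists_pos_lintegral_lt_of_sigmaFinite ν
    (ENNReal.coe_ne_zero.2 hε.ne')
  have hw := hnorm.add hv.coe_nnreal_ennreal
  have hbound := lintegral_rpow_lintegral_le_of_weight (ν := ν) hp hG hw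
    (fun u => by simp [(hv_pos u).ne'])
    (by
      filter_upwards [ae_lt_top hnorm hfin.ne] with u hu
      exact ENNReal.add_ne_top.2 ⟨hu.ne, ENNReal.coe_ne_top⟩)
    (fun u => by
      rw [← ENNReal.rpow_inv_le_iff hp0, ← one_div]
      exact le_self_add)
  rw [one_div, ENNReal.rpow_inv_le_iff hp0, ← one_div]
  refine hbound.trans (ENNReal.rpow_le_rpow ?_ hp0.le)
  rw [Pi.add_def, lintegral_add_left hnorm]
  gcongr

theorem eLpNorm_integral_le {Y : Type*} [NormedAddCommGroup Y] [NormedSpace ℝ Y] [SigmaFinite ν]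
    [SFinite μ] {p : ℝ≥0∞} (hp : 1 ≤ p) (hp_top : p ≠ ∞) {G : α → β → Y}
    (hG : StronglyMeasurable (uncurry G)) :
    eLpNorm (fun h => ∫ u, G u h ∂ν) p μ ≤ ∫⁻ u, eLpNorm (G u) p μ ∂ν := by
  have hp0 : p ≠ 0 := (one_pos.trans_le hp).ne'
  have hp1 : 1 ≤ p.toReal := by simpa using ENNReal.toReal_mono hp_top hp
  simp only [eLpNorm_eq_lintegral_rpow_enorm_toReal hp0 hp_top]
  refine le_trans ?_ (lintegral_Lp_lintegral_le hp1 hG.enorm)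
  gcongr with h
  exact enorm_integral_le_lintegral_enorm _

end Minkowski

section Increments

open Set Function ENNReal

variable {α Y : Type*} [MeasurableSpace α] {μ : Measure α} [NormedAddCommGroup Y] {p : ℝ≥0∞}
  {g : α → Y} {S T : α → α}

theorem eLpNorm_comp_comp_sub_le (hp : 1 ≤ p) (hg : AEStronglyMeasurable g μ)
    (hS : MeasurePreserving S μ μ) (hT : MeasurePreserving T μ μ) :
    eLpNorm (g ∘ T ∘ S - g) p μ ≤ eLpNorm (g ∘ T - g) p μ + eLpNorm (g ∘ S - g) p μ := by
  have hgS := hg.comp_measurePreserving hS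
  have hgT := (hg.comp_measurePreserving hT).sub hg
  calc eLpNorm (g ∘ T ∘ S - g) p μ
      = eLpNorm ((g ∘ T - g) ∘ S + (g ∘ S - g)) p μ := by
        congr 1; exact (sub_add_sub_cancel _ _ _).symm
    _ ≤ eLpNorm ((g ∘ T - g) ∘ S) p μ + eLpNorm (g ∘ S - g) p μ :=
        eLpNorm_add_le (hgT.comp_measurePreserving hS) (hgS.sub hg) hp
    _ = eLpNorm (g ∘ T - g) p μ + eLpNorm (g ∘ S - g) p μ := by
        rw [eLpNorm_comp_measurePreserving hgT hS]

theorem eLpNorm_comp_sub_eq_of_leftInverse (hg : AEStronglyMeasurable g μ)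
    (hS : MeasurePreserving S μ μ) (hT : MeasurePreserving T μ μ) (hTS : LeftInverse T S) :
    eLpNorm (g ∘ S - g) p μ = eLpNorm (g ∘ T - g) p μ := by
  have hgT := (hg.comp_measurePreserving hT).sub hg
  rw [eLpNorm_sub_comm, ← eLpNorm_comp_measurePreserving hgT hS]
  congr 1
  ext x
  simp [hTS x]

theorem eLpNorm_comp_commutator_sub_le {S' T' : α → α} (hp : 1 ≤ p)
    (hg : AEStronglyMeasurable g μ) (hS : MeasurePreserving S μ μ) (hT : MeasurePreserving T μ μ)
    (hS' : MeasurePreserving S' μ μ) (hT' : MeasurePreserving T' μ μ) (hSS' : LeftInverse S S')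
    (hTT' : LeftInverse T T') :
    eLpNorm (g ∘ T' ∘ S' ∘ T ∘ S - g) p μ ≤
      2 * (eLpNorm (g ∘ S - g) p μ + eLpNorm (g ∘ T - g) p μ) := by
  calc eLpNorm (g ∘ T' ∘ S' ∘ T ∘ S - g) p μ
      ≤ eLpNorm (g ∘ T' - g) p μ + (eLpNorm (g ∘ S' - g) p μ +
          (eLpNorm (g ∘ T - g) p μ + eLpNorm (g ∘ S - g) p μ)) :=
        (eLpNorm_comp_comp_sub_le hp hg (hS'.comp (hT.comp hS)) hT').trans <| by
          gcongr
          refine (eLpNorm_comp_comp_sub_le hp hg (hT.comp hS) hS').trans ?_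
          gcongr
          exact eLpNorm_comp_comp_sub_le hp hg hS hT
    _ = 2 * (eLpNorm (g ∘ S - g) p μ + eLpNorm (g ∘ T - g) p μ) := by
        rw [eLpNorm_comp_sub_eq_of_leftInverse hg hS' hS hSS',
          eLpNorm_comp_sub_eq_of_leftInverse hg hT' hT hTT']
        ring

theorem eLpNorm_comp_flow_sub_le [SFinite μ] [NormedSpace ℝ Y] [CompleteSpace Y] (hp : 1 ≤ p)
    (hp_top : p ≠ ∞) {Φ : ℝ → α → α} (hΦ : Measurable (uncurry Φ))
    (hΦμ : ∀ σ, MeasurePreserving (Φ σ) μ μ) (hΦ_zero : Φ 0 = id) {dg : α → Y}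
    (hdg : StronglyMeasurable dg)
    (hderiv : ∀ x σ, HasDerivAt (fun σ => g (Φ σ x)) (dg (Φ σ x)) σ)
    (hcont : ∀ x, Continuous fun σ => dg (Φ σ x)) {s : ℝ} (hs : 0 ≤ s) :
    eLpNorm (g ∘ Φ s - g) p μ ≤ ENNReal.ofReal s * eLpNorm dg p μ := by
  have hftc : g ∘ Φ s - g = fun x => ∫ σ in Ioc 0 s, dg (Φ σ x) := by
    ext x
    rw [← intervalIntegral.integral_of_le hs, intervalIntegral.integral_eq_sub_of_hasDerivAt
      (fun σ _ => hderiv x σ) ((hcont x).intervalIntegrable _ _), hΦ_zero]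
    rfl
  calc eLpNorm (g ∘ Φ s - g) p μ
      ≤ ∫⁻ σ in Ioc 0 s, eLpNorm (dg ∘ Φ σ) p μ := by
        rw [hftc]
        exact eLpNorm_integral_le hp hp_top (hdg.comp_measurable hΦ)
    _ = ENNReal.ofReal s * eLpNorm dg p μ := by
        simp_rw [eLpNorm_comp_measurePreserving hdg.aestronglyMeasurable (hΦμ _)]
        rw [setLIntegral_const, Real.volume_Ioc, sub_zero, mul_comm]

end Increments

section Dilations

open Set Filter Function ENNReal Topology

theorem le_tsum_of_le_comp_mul_add {N E : ℝ → ℝ≥0∞} {b : ℝ} (hb : 1 < b)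
    (hNE : ∀ t, 0 < t → N t ≤ N (b * t) + E t) (hN : Tendsto N atTop (𝓝 0)) {t : ℝ} (ht : 0 < t) :
    N t ≤ ∑' k : ℕ, E (b ^ k * t) := by
  have hiter (n : ℕ) : N t ≤ N (b ^ n * t) + ∑ k ∈ Finset.range n, E (b ^ k * t) := by
    induction n with
    | zero => simp
    | succ n ih =>
      calc N t ≤ N (b ^ n * t) + ∑ k ∈ Finset.range n, E (b ^ k * t) := ih
        _ ≤ N (b * (b ^ n * t)) + E (b ^ n * t) + ∑ k ∈ Finset.range n, E (b ^ k * t) := by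
            gcongr; exact hNE _ (by positivity)
        _ = N (b ^ (n + 1) * t) + ∑ k ∈ Finset.range (n + 1), E (b ^ k * t) := by
            rw [Finset.sum_range_succ, add_assoc, add_comm (E _), pow_succ', mul_assoc]
  have hlim : Tendsto (fun n : ℕ => N (b ^ n * t)) atTop (𝓝 0) :=
    hN.comp ((tendsto_pow_atTop_atTop_of_one_lt hb).atTop_mul_const ht)
  have htail := hlim.add_const (∑' k : ℕ, E (b ^ k * t))
  rw [zero_add] at htail
  exact ge_of_tendsto' htail fun n => (hiter n).trans (by gcongr; exact ENNReal.sum_le_tsum _)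

theorem setLIntegral_Ioi_rpow_mul_comp_mul {E : ℝ → ℝ≥0∞} {a b : ℝ} (hb : 0 < b) :
    ∫⁻ t in Ioi 0, ENNReal.ofReal (t ^ (a - 1)) * E (b * t) =
      ENNReal.ofReal (b ^ (-a)) * ∫⁻ t in Ioi 0, ENNReal.ofReal (t ^ (a - 1)) * E t := by
  have himage : (fun t => b * t) '' Ioi 0 = Ioi 0 := by
    rw [image_mul_left_Ioi hb, mul_zero]
  have hchange := lintegral_image_eq_lintegral_abs_deriv_mul measurableSet_Ioi
    (fun t _ => (hasDerivAt_const_mul b).hasDerivWithinAt) (mul_right_injective₀ hb.ne').injOn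
    (s := Ioi 0) fun t => ENNReal.ofReal (t ^ (a - 1)) * E t
  rw [himage] at hchange
  rw [hchange, ← lintegral_const_mul' _ _ ofReal_ne_top]
  refine setLIntegral_congr_fun measurableSet_Ioi fun t ht => ?_
  have ht0 : 0 < t := ht
  have hpow : t ^ (a - 1) = b ^ (-a) * (b * (b * t) ^ (a - 1)) := by
    rw [Real.mul_rpow hb.le ht0.le, Real.rpow_sub_one hb.ne', Real.rpow_neg hb.le]
    field_simp
  rw [hpow, ENNReal.ofReal_mul (by positivity), ENNReal.ofReal_mul (by positivity), abs_of_pos hb]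
  ring

/-- A discrete form of Hardy's inequality. -/
theorem lintegral_Ioi_rpow_mul_tsum_comp_pow_mul_le {E : ℝ → ℝ≥0∞} (hE : Measurable E)
    {α b q : ℝ} (hα : 0 < α) (hb : 1 < b) (hq : 1 ≤ q) :
    (∫⁻ t in Ioi 0, ENNReal.ofReal (t ^ (α * q - 1)) * (∑' k : ℕ, E (b ^ k * t)) ^ q) ^ (1 / q) ≤
      ENNReal.ofReal (1 - b ^ (-α))⁻¹ *
        (∫⁻ t in Ioi 0, ENNReal.ofReal (t ^ (α * q - 1)) * E t ^ q) ^ (1 / q) := by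
  have hb0 : 0 < b := one_pos.trans hb
  let weight : ℝ → ℝ≥0∞ := fun t => ENNReal.ofReal (t ^ (α * q - 1))
  have hweight : Measurable weight := by fun_prop
  have hdilate (k : ℕ) : (∫⁻ t in Ioi 0, weight t * E (b ^ k * t) ^ q) ^ (1 / q) =
      ENNReal.ofReal (b ^ (-α)) ^ k * (∫⁻ t in Ioi 0, weight t * E t ^ q) ^ (1 / q) := by
    rw [setLIntegral_Ioi_rpow_mul_comp_mul (E := fun t => E t ^ q) (pow_pos hb0 k),
      ENNReal.mul_rpow_of_nonneg _ _ (by positivity),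
      ENNReal.ofReal_rpow_of_nonneg (by positivity) (by positivity),
      ← ENNReal.ofReal_pow (by positivity), ← Real.rpow_mul (by positivity),
      ← Real.rpow_natCast_mul hb0.le, ← Real.rpow_mul_natCast hb0.le]
    congr 3
    field_simp
  have hsum : ∑' k : ℕ, ENNReal.ofReal (b ^ (-α)) ^ k = ENNReal.ofReal (1 - b ^ (-α))⁻¹ := by
    have hlt : b ^ (-α) < 1 := Real.rpow_lt_one_of_one_lt_of_neg hb (neg_lt_zero.2 hα)
    rw [ENNReal.tsum_geometric, ENNReal.ofReal_inv_of_pos (sub_pos.2 hlt),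
      ENNReal.ofReal_sub _ (by positivity), ENNReal.ofReal_one]
  have hminkowski := lintegral_Lp_lintegral_le (ν := Measure.count)
    (μ := (volume.restrict (Ioi 0)).withDensity weight) hq
    (measurable_from_prod_countable_right fun k => hE.comp (measurable_const_mul (b ^ k)) :
      Measurable (uncurry fun (k : ℕ) (t : ℝ) => E (b ^ k * t)))
  simp only [lintegral_count] at hminkowski
  rw [lintegral_withDensity_eq_lintegral_mul _ hweight (by fun_prop)] at hminkowski
  refine hminkowski.trans_eq ?_
  rw [← hsum, ← ENNReal.tsum_mul_right]
  refine tsum_congr fun k => ?_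
  rw [← hdilate, lintegral_withDensity_eq_lintegral_mul _ hweight (by fun_prop)]
  rfl

end Dilations

section WeightedNorms

open Set ENNReal

variable {α Y : Type*} [MeasurableSpace α] {μ : Measure α} [NormedAddCommGroup Y] {p : ℝ}
  {g g' : α → Y}

theorem lintegral_mul_const_mul_rpow {q : ℝ} (hq : 0 < q) {c : ℝ≥0∞} (hc : c ≠ ∞)
    (w F : α → ℝ≥0∞) :
    (∫⁻ t, w t * (c * F t) ^ q ∂μ) ^ (1 / q) = c * (∫⁻ t, w t * F t ^ q ∂μ) ^ (1 / q) := by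
  simp only [ENNReal.mul_rpow_of_nonneg _ _ hq.le, mul_left_comm (w _)]
  rw [lintegral_const_mul' _ _ (ENNReal.rpow_ne_top_of_nonneg hq.le hc),
    ENNReal.mul_rpow_of_nonneg _ _ (by positivity), ← ENNReal.rpow_mul, mul_one_div_cancel hq.ne',
    ENNReal.rpow_one]

theorem setLIntegral_Ioi_ofReal_rpow_mul_rpow {a q : ℝ} (hq : 0 ≤ q) {N : ℝ → ℝ}
    (hN : ∀ t, 0 ≤ N t) :
    ∫⁻ t in Ioi 0, ENNReal.ofReal (t ^ a * N t ^ q) =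
      ∫⁻ t in Ioi 0, ENNReal.ofReal (t ^ a) * ENNReal.ofReal (N t) ^ q := by
  refine setLIntegral_congr_fun measurableSet_Ioi fun t ht => ?_
  rw [ENNReal.ofReal_mul (Real.rpow_nonneg ht.out.le a), ENNReal.ofReal_rpow_of_nonneg (hN t) hq]

theorem eLpNorm_ofReal_eq_ofReal_integral (hp : 0 < p) (hg : MemLp g (.ofReal p) μ) :
    eLpNorm g (.ofReal p) μ = ENNReal.ofReal ((∫ h, ‖g h‖ ^ p ∂μ) ^ (1 / p)) := by
  rw [hg.eLpNorm_eq_integral_rpow_norm (ENNReal.ofReal_pos.2 hp).ne' ofReal_ne_top,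
    toReal_ofReal hp.le, one_div]

theorem eLpNorm_ofReal_add_le_ofReal_integral (hp : 0 < p) (hg : MemLp g (.ofReal p) μ)
    (hg' : MemLp g' (.ofReal p) μ) :
    eLpNorm g (.ofReal p) μ + eLpNorm g' (.ofReal p) μ ≤
      2 * ENNReal.ofReal ((∫ h, (‖g h‖ ^ p + ‖g' h‖ ^ p) ∂μ) ^ (1 / p)) := by
  have hint {F : α → Y} (hF : MemLp F (.ofReal p) μ) : Integrable (fun h => ‖F h‖ ^ p) μ := by
    simpa only [toReal_ofReal hp.le] using
      hF.integrable_norm_rpow (ENNReal.ofReal_pos.2 hp).ne' ofReal_ne_top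
  rw [eLpNorm_ofReal_eq_ofReal_integral hp hg, eLpNorm_ofReal_eq_ofReal_integral hp hg', two_mul,
    integral_add (hint hg) (hint hg')]
  gcongr
  · exact le_add_of_nonneg_right (by positivity)
  · exact le_add_of_nonneg_left (by positivity)

end WeightedNorms

section Laplace

open Set Complex

variable {a b : ℂ}

theorem eqOn_Ioi_cexp_mul_sub_mul_abs :
    EqOn (fun v : ℝ => cexp ((b - a) * v)) (fun v : ℝ => cexp (b * v - a * (|v| : ℝ))) (Ioi 0) :=
  fun v hv => by simp only [abs_of_pos hv.out, sub_mul]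

theorem eqOn_Iic_cexp_mul_sub_mul_abs :
    EqOn (fun v : ℝ => cexp ((b + a) * v)) (fun v : ℝ => cexp (b * v - a * (|v| : ℝ))) (Iic 0) :=
  fun v hv => by simp only [abs_of_nonpos hv.out, ofReal_neg, mul_neg, sub_neg_eq_add, add_mul]

theorem integrableOn_Ioi_cexp_mul_sub_mul_abs (hab : b.re < a.re) :
    IntegrableOn (fun v : ℝ => cexp (b * v - a * (|v| : ℝ))) (Ioi 0) :=
  (integrableOn_exp_mul_complex_Ioi (sub_re b a ▸ sub_neg.2 hab) 0).congr_fun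
    eqOn_Ioi_cexp_mul_sub_mul_abs measurableSet_Ioi

theorem integrableOn_Iic_cexp_mul_sub_mul_abs (hab : -a.re < b.re) :
    IntegrableOn (fun v : ℝ => cexp (b * v - a * (|v| : ℝ))) (Iic 0) :=
  (integrableOn_exp_mul_complex_Iic (add_re b a ▸ neg_lt_iff_pos_add.1 hab) 0).congr_fun
    eqOn_Iic_cexp_mul_sub_mul_abs measurableSet_Iic

theorem integrable_cexp_mul_sub_mul_abs (hab : |b.re| < a.re) :
    Integrable fun v : ℝ => cexp (b * v - a * (|v| : ℝ)) := by
  rw [← integrableOn_univ, ← Iic_union_Ioi (a := (0 : ℝ))]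
  exact (integrableOn_Iic_cexp_mul_sub_mul_abs (abs_lt.1 hab).1).union
    (integrableOn_Ioi_cexp_mul_sub_mul_abs (abs_lt.1 hab).2)

theorem integral_cexp_mul_sub_mul_abs (hab : |b.re| < a.re) :
    ∫ v : ℝ, cexp (b * v - a * (|v| : ℝ)) = 2 * a / (a ^ 2 - b ^ 2) := by
  obtain ⟨hneg, hpos⟩ := abs_lt.1 hab
  have hsub : (b - a).re < 0 := sub_re b a ▸ sub_neg.2 hpos
  have hadd : 0 < (b + a).re := add_re b a ▸ neg_lt_iff_pos_add.1 hneg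
  have hsub_ne : b - a ≠ 0 := fun h => hsub.ne (by rw [h, zero_re])
  have hadd_ne : b + a ≠ 0 := fun h => hadd.ne' (by rw [h, zero_re])
  have hsq : a ^ 2 - b ^ 2 = -((b - a) * (b + a)) := by ring
  rw [← intervalIntegral.integral_Iic_add_Ioi (integrableOn_Iic_cexp_mul_sub_mul_abs hneg)
      (integrableOn_Ioi_cexp_mul_sub_mul_abs hpos),
    ← setIntegral_congr_fun measurableSet_Iic eqOn_Iic_cexp_mul_sub_mul_abs,
    ← setIntegral_congr_fun measurableSet_Ioi eqOn_Ioi_cexp_mul_sub_mul_abs,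
    integral_exp_mul_complex_Iic hadd, integral_exp_mul_complex_Ioi hsub, hsq]
  simp only [ofReal_zero, mul_zero, exp_zero]
  field_simp
  ring

end Laplace

namespace HR

section PoissonKernel

open Function ProbabilityTheory

variable {t : ℝ}

theorem Pker_eq_cauchyPDFReal (ht : 0 ≤ t) : Pker t = cauchyPDFReal 0 ⟨t, ht⟩ := by
  ext u
  change t / (Real.pi * (t ^ 2 + u ^ 2)) = Real.pi⁻¹ * t * ((u - 0) ^ 2 + t ^ 2)⁻¹
  rw [sub_zero, add_comm (u ^ 2), div_eq_mul_inv, mul_inv]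
  ring

theorem Pker_pos (ht : 0 < t) (u : ℝ) : 0 < Pker t u := by
  unfold Pker; positivity

theorem continuous_Pker (ht : 0 < t) : Continuous (Pker t) := by
  unfold Pker
  exact continuous_const.div (by fun_prop) fun u => by positivity

theorem continuous_Qker (ht : 0 < t) : Continuous (Qker t) := by
  unfold Qker
  exact Continuous.div (by fun_prop) (by fun_prop) fun u => by positivity

theorem measurable_Qker : Measurable (uncurry Qker) := by
  unfold Qker uncurry
  fun_prop

theorem hasDerivAt_Pker (ht : t ≠ 0) (u : ℝ) : HasDerivAt (Pker · u) (Qker t u) t := by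
  have hden : Real.pi * (t ^ 2 + u ^ 2) ≠ 0 := by positivity
  refine ((hasDerivAt_id t).div (((hasDerivAt_pow 2 t).add_const (u ^ 2)).const_mul Real.pi)
    hden).congr_deriv ?_
  simp only [Qker, id]
  field_simp
  ring

theorem integrable_Pker (ht : 0 ≤ t) : Integrable (Pker t) := by
  rw [Pker_eq_cauchyPDFReal ht]
  exact integrable_cauchyPDFReal 0

theorem integral_Pker (ht : 0 < t) : ∫ u, Pker t u = 1 := by
  rw [Pker_eq_cauchyPDFReal ht.le]
  exact integral_cauchyPDFReal_eq_one 0 (NNReal.coe_ne_zero.1 ht.ne')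

theorem Pker_le (ht : 0 < t) (u : ℝ) : Pker t u ≤ (Real.pi * t)⁻¹ := by
  rw [Pker, ← one_div, div_le_div_iff₀ (by positivity) (by positivity)]
  nlinarith [mul_nonneg Real.pi_pos.le (sq_nonneg u)]

theorem abs_Qker_le (ht : 0 < t) (u : ℝ) : |Qker t u| ≤ t⁻¹ * Pker t u := by
  have hP : t⁻¹ * Pker t u = (u ^ 2 + t ^ 2) / (Real.pi * (t ^ 2 + u ^ 2) ^ 2) := by
    rw [Pker]; field_simp; ring
  rw [hP, Qker, abs_div, abs_of_pos (by positivity : 0 < Real.pi * (t ^ 2 + u ^ 2) ^ 2)]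
  gcongr
  exact (abs_sub _ _).trans_eq (by simp)

theorem integrable_Qker (ht : 0 < t) : Integrable (Qker t) :=
  ((integrable_Pker ht.le).const_mul t⁻¹).mono' (continuous_Qker ht).aestronglyMeasurable
    (.of_forall (abs_Qker_le ht))

theorem lintegral_enorm_Qker_le (ht : 0 < t) : ∫⁻ u, ‖Qker t u‖ₑ ≤ ENNReal.ofReal t⁻¹ := by
  rw [← ofReal_integral_norm_eq_lintegral_enorm (integrable_Qker ht)]
  refine ENNReal.ofReal_le_ofReal ?_
  calc ∫ u, ‖Qker t u‖ ≤ ∫ u, t⁻¹ * Pker t u :=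
        integral_mono (integrable_Qker ht).norm ((integrable_Pker ht.le).const_mul _)
          (abs_Qker_le ht)
    _ = t⁻¹ := by rw [integral_const_mul, integral_Pker ht, mul_one]

/-- The moment `∫ P₁(u) |u|^α du` of the Poisson kernel, finite for `0 ≤ α < 1`. -/
noncomputable def poissonMoment (α : ℝ) : ℝ := ∫ u, Pker 1 u * |u| ^ α

theorem integrable_Pker_one_mul_rpow {α : ℝ} (hα : 0 ≤ α) (hα_lt : α < 1) :
    Integrable fun u => Pker 1 u * |u| ^ α := by
  have hdom := (integrable_rpow_neg_one_add_norm_sq (E := ℝ) (μ := volume) (r := 2 - α)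
    (by simpa using by linarith)).const_mul Real.pi⁻¹
  refine hdom.mono' ((continuous_Pker one_pos).mul
    (continuous_abs.rpow_const fun _ => .inr hα)).aestronglyMeasurable (.of_forall fun u => ?_)
  have hu : 0 < 1 + u ^ 2 := by positivity
  have habs : |u| ≤ (1 + u ^ 2) ^ (1 / 2 : ℝ) := by
    rw [← Real.sqrt_eq_rpow]
    exact Real.abs_le_sqrt (by linarith)
  calc ‖Pker 1 u * |u| ^ α‖ = Real.pi⁻¹ * ((1 + u ^ 2) ^ (-1 : ℝ) * |u| ^ α) := by
        rw [Real.norm_of_nonneg (mul_nonneg (Pker_pos one_pos u).le (by positivity)), Pker,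
          Real.rpow_neg_one, one_pow, one_div, mul_inv, mul_assoc]
    _ ≤ Real.pi⁻¹ * ((1 + u ^ 2) ^ (-1 : ℝ) * ((1 + u ^ 2) ^ (1 / 2 : ℝ)) ^ α) := by gcongr
    _ = Real.pi⁻¹ * (1 + ‖u‖ ^ 2) ^ (-(2 - α) / 2) := by
        rw [← Real.rpow_mul hu.le, ← Real.rpow_add hu, Real.norm_eq_abs, sq_abs]
        ring_nf

theorem poissonMoment_pos {α : ℝ} (hα : 0 ≤ α) (hα_lt : α < 1) : 0 < poissonMoment α := by
  refine integral_pos_of_integrable_nonneg_nonzero (x := 1) ((continuous_Pker one_pos).mul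
    (continuous_abs.rpow_const fun _ => .inr hα)) (integrable_Pker_one_mul_rpow hα hα_lt)
    (fun u => mul_nonneg (Pker_pos one_pos u).le (by positivity)) ?_
  simpa using (Pker_pos one_pos 1).ne'

theorem lintegral_Pker_mul_rpow {α : ℝ} (hα : 0 ≤ α) (hα_lt : α < 1) (ht : 0 < t) :
    ∫⁻ u, ENNReal.ofReal (Pker t u * |u| ^ α) = ENNReal.ofReal (t ^ α * poissonMoment α) := by
  have hscale (u : ℝ) :
      Pker t u * |u| ^ α = t ^ α * t⁻¹ * (Pker 1 (t⁻¹ * u) * |t⁻¹ * u| ^ α) := by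
    rw [abs_mul, abs_of_pos (inv_pos.2 ht), Real.mul_rpow (by positivity) (abs_nonneg u),
      Real.inv_rpow ht.le, Pker, Pker]
    field_simp
  have hint := integrable_Pker_one_mul_rpow hα hα_lt
  simp_rw [hscale]
  rw [← ofReal_integral_eq_lintegral_ofReal
      ((hint.comp_mul_left' (inv_ne_zero ht.ne')).const_mul _)
      (.of_forall fun u => mul_nonneg (by positivity)
        (mul_nonneg (Pker_pos one_pos _).le (by positivity))), integral_const_mul,
    Measure.integral_comp_mul_left (fun u => Pker 1 u * |u| ^ α), inv_inv, abs_of_pos ht,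
    smul_eq_mul, ← poissonMoment]
  field_simp

end PoissonKernel

section Semigroup

open Set Filter Topology
open scoped Convolution FourierTransform

variable {s t : ℝ}

theorem integrable_exp_neg_mul_abs (ht : 0 < t) :
    Integrable fun v : ℝ => Complex.exp (-(2 * Real.pi * t : ℝ) * (|v| : ℝ)) := by
  have hre : |(0 : ℂ).re| < ((2 * Real.pi * t : ℝ) : ℂ).re := by
    rw [Complex.zero_re, abs_zero, Complex.ofReal_re]; positivity
  simpa only [zero_mul, zero_sub, neg_mul] using integrable_cexp_mul_sub_mul_abs hre

theorem fourierInv_exp_neg_mul_abs (ht : 0 < t) :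
    𝓕⁻ (fun v : ℝ => Complex.exp (-(2 * Real.pi * t : ℝ) * (|v| : ℝ))) =
      fun x => (Pker t x : ℂ) := by
  ext x
  set a : ℂ := ((2 * Real.pi * t : ℝ) : ℂ) with ha
  set b : ℂ := ((2 * Real.pi * x : ℝ) : ℂ) * Complex.I with hb
  have hre : |b.re| < a.re := by
    rw [hb, Complex.re_ofReal_mul, Complex.I_re, mul_zero, abs_zero, ha, Complex.ofReal_re]
    positivity
  calc 𝓕⁻ (fun v : ℝ => Complex.exp (-a * (|v| : ℝ))) x
      = ∫ v : ℝ, Complex.exp (b * v - a * (|v| : ℝ)) := by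
        rw [Real.fourierInv_eq']
        refine integral_congr_ae (.of_forall fun v => ?_)
        simp only [smul_eq_mul, ← Complex.exp_add, hb, RCLike.inner_apply, conj_trivial]
        push_cast; ring_nf
    _ = 2 * a / (a ^ 2 - b ^ 2) := integral_cexp_mul_sub_mul_abs hre
    _ = Pker t x := by
        have hden : ((t ^ 2 + x ^ 2 : ℝ) : ℂ) ≠ 0 := by exact_mod_cast (by positivity)
        have hsq : a ^ 2 - b ^ 2 = (2 * Real.pi) ^ 2 * (t ^ 2 + x ^ 2 : ℝ) := by
          rw [ha, hb, mul_pow _ Complex.I, Complex.I_sq]; push_cast; ring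
        rw [hsq, Pker, ha]
        push_cast at hden ⊢
        field_simp

theorem fourier_Pker (ht : 0 < t) :
    𝓕 (fun x => (Pker t x : ℂ)) =
      fun v : ℝ => Complex.exp (-(2 * Real.pi * t : ℝ) * (|v| : ℝ)) := by
  rw [← fourierInv_exp_neg_mul_abs ht]
  refine Continuous.fourier_fourierInv_eq (by fun_prop) (integrable_exp_neg_mul_abs ht) ?_
  have hP : Integrable fun x => (Pker t x : ℂ) := (integrable_Pker ht.le).ofReal
  rw [← fourierInv_exp_neg_mul_abs ht] at hP
  simpa only [Real.fourierInv_eq_fourier_neg, neg_neg] using hP.comp_neg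

theorem integral_Pker_mul_Pker (hs : 0 < s) (ht : 0 < t) (x : ℝ) :
    ∫ u, Pker s u * Pker t (x - u) = Pker (s + t) x := by
  let P (r x : ℝ) : ℂ := Pker r x
  have hint {r : ℝ} (hr : 0 < r) : Integrable (P r) := (integrable_Pker hr.le).ofReal
  have hcont {r : ℝ} (hr : 0 < r) : Continuous (P r) :=
    Complex.continuous_ofReal.comp (continuous_Pker hr)
  have hbdd : BddAbove (range fun x => ‖P s x‖) := by
    refine ⟨(Real.pi * s)⁻¹, forall_mem_range.2 fun u => ?_⟩
    rw [Complex.norm_real, Real.norm_of_nonneg (Pker_pos hs u).le]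
    exact Pker_le hs u
  have hfourier : 𝓕 (P s ⋆[ContinuousLinearMap.mul ℂ ℂ] P t) =
      fun v : ℝ => Complex.exp (-(2 * Real.pi * (s + t) : ℝ) * (|v| : ℝ)) := by
    ext v
    rw [Real.fourier_mul_convolution_eq (hint hs) (hint ht), fourier_Pker hs, fourier_Pker ht,
      ← Complex.exp_add]
    push_cast; ring_nf
  have hinv := (hbdd.continuous_convolution_left_of_integrable
    (ContinuousLinearMap.mul ℂ ℂ) (hcont hs) (hint ht)).fourierInv_fourier_eq
    ((hint hs).integrable_convolution _ (hint ht))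
    (hfourier ▸ integrable_exp_neg_mul_abs (add_pos hs ht))
  rw [hfourier, fourierInv_exp_neg_mul_abs (add_pos hs ht)] at hinv
  have hx := congrFun hinv x
  simp only [convolution_def, ContinuousLinearMap.mul_apply', P, ← Complex.ofReal_mul,
    integral_complex_ofReal] at hx
  exact (Complex.ofReal_injective hx).symm

theorem integrable_Pker_mul_Pker_sub (hs : 0 < s) (ht : 0 < t) (x : ℝ) :
    Integrable fun u => Pker s u * Pker t (x - u) :=
  (integrable_Pker hs.le).mul_bdd (c := (Real.pi * t)⁻¹)
    ((continuous_Pker ht).comp (continuous_sub_left x)).aestronglyMeasurable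
    (.of_forall fun _ => (Real.norm_of_nonneg (Pker_pos ht _).le).trans_le (Pker_le ht _))

theorem integral_Pker_mul_Qker (hs : 0 < s) (ht : 0 < t) (x : ℝ) :
    ∫ u, Pker s u * Qker t (x - u) = Qker (s + t) x := by
  have hpos {τ : ℝ} (hτ : τ ∈ Ioi (t / 2)) : 0 < τ := (half_pos ht).trans hτ
  have hnhds : Ioi (t / 2) ∈ 𝓝 t := Ioi_mem_nhds (half_lt_self ht)
  have hbound (u : ℝ) {τ : ℝ} (hτ : τ ∈ Ioi (t / 2)) :
      ‖Pker s u * Qker τ (x - u)‖ ≤ Pker s u * ((t / 2)⁻¹ * (Real.pi * (t / 2))⁻¹) := by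
    rw [norm_mul, Real.norm_of_nonneg (Pker_pos hs u).le]
    refine mul_le_mul_of_nonneg_left ?_ (Pker_pos hs u).le
    have hτ0 := hpos hτ
    calc ‖Qker τ (x - u)‖ ≤ τ⁻¹ * Pker τ (x - u) := abs_Qker_le hτ0 _
      _ ≤ τ⁻¹ * (Real.pi * τ)⁻¹ := by gcongr; exact Pker_le hτ0 _
      _ ≤ (t / 2)⁻¹ * (Real.pi * (t / 2))⁻¹ := by gcongr <;> exact hτ.out.le
  have hderiv : HasDerivAt (fun τ => ∫ u, Pker s u * Pker τ (x - u))
      (∫ u, Pker s u * Qker t (x - u)) t :=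
    (hasDerivAt_integral_of_dominated_loc_of_deriv_le hnhds
      (eventually_of_mem hnhds fun τ hτ =>
        (integrable_Pker_mul_Pker_sub hs (hpos hτ) x).aestronglyMeasurable)
      (integrable_Pker_mul_Pker_sub hs ht x)
      ((continuous_Pker hs).mul ((continuous_Qker ht).comp (by fun_prop))).aestronglyMeasurable
      (.of_forall fun u τ hτ => hbound u hτ) ((integrable_Pker hs.le).mul_const _)
      (.of_forall fun u τ hτ => (hasDerivAt_Pker (hpos hτ).ne' _).const_mul _)).2
  have hsemigroup : (fun τ => ∫ u, Pker s u * Pker τ (x - u)) =ᶠ[𝓝 t] fun τ => Pker (s + τ) x :=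
    eventually_of_mem hnhds fun τ hτ => integral_Pker_mul_Pker hs (hpos hτ) x
  exact hderiv.unique (((hasDerivAt_Pker (add_pos hs ht).ne' x).comp_const_add s
    t).congr_of_eventuallyEq hsemigroup)

end Semigroup

section RightTranslation

open Function

/-- The right translation `h ↦ h·k` by `k` of the Heisenberg group. -/
def rmul (k h : HR) : HR := (h.1 + k.1, h.2.1 + k.2.1, h.2.2 + k.2.2 + h.1 * k.2.1)

theorem rmul_zero : rmul 0 = id := by
  ext h <;> simp [rmul]

theorem rmul_rmul (k l h : HR) : rmul k (rmul l h) = rmul (rmul k l) h := by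
  ext <;> simp only [rmul] <;> ring

theorem vmul_eq_rmul (t : ℝ) : vmul t = rmul (0, 0, t) := by
  ext h <;> simp [rmul, vmul]

theorem vmul_sq_eq_commutator (s : ℝ) :
    vmul (s ^ 2) =
      rmul (0, -s, 0) ∘ rmul (-s, 0, 0) ∘ rmul (0, s, 0) ∘ rmul (s, 0, 0) := by
  ext h <;> simp only [rmul, vmul, comp_apply] <;> ring

theorem measurable_rmul : Measurable (uncurry rmul) := by
  unfold rmul uncurry
  fun_prop

theorem measurePreserving_rmul (k : HR) : MeasurePreserving (rmul k) := by
  have hfiber (x : ℝ) : MeasurePreserving (fun w : ℝ × ℝ => (w.1 + k.2.1, w.2 + k.2.2 + x * k.2.1))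
      (volume.prod volume) (volume.prod volume) := by
    simp only [add_assoc]
    exact (measurePreserving_add_right volume _).prod (measurePreserving_add_right volume _)
  exact (measurePreserving_add_right volume k.1).skew_product
    (g := fun (x : ℝ) (w : ℝ × ℝ) => (w.1 + k.2.1, w.2 + k.2.2 + x * k.2.1)) (by fun_prop)
    (.of_forall fun x => (hfiber x).map_eq)

theorem measurePreserving_vmul (t : ℝ) : MeasurePreserving (vmul t) :=
  vmul_eq_rmul t ▸ measurePreserving_rmul _

theorem measurable_vmul : Measurable (uncurry vmul) := by
  unfold vmul uncurry; fun_prop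

theorem continuous_vmul (h : HR) : Continuous fun u => vmul u h := by
  unfold vmul; fun_prop

end RightTranslation

section CentralConvolution

open Function ENNReal
open scoped Convolution

variable {X : Type*} [NormedAddCommGroup X] [NormedSpace ℝ X] {ψ : ℝ → ℝ} {g : HR → X} {M : ℝ}

theorem vmul_eq_add (u : ℝ) (h : HR) : vmul u h = h + (0, 0, u) := by
  simp [vmul, Prod.ext_iff]

theorem conv_eq (ψ : ℝ → ℝ) (g : HR → X) (h : HR) :
    conv ψ g h = ∫ u, ψ u • g (vmul (-u) h) := by
  simp only [conv, vmul, sub_eq_add_neg]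

theorem stronglyMeasurable_uncurry_conv {α : Type*} [MeasurableSpace α] {Ψ : α → ℝ → ℝ}
    (hΨ : Measurable (uncurry Ψ)) (hg : StronglyMeasurable g) :
    StronglyMeasurable (uncurry fun a => conv (Ψ a) g) := by
  simp only [uncurry_def, conv_eq]
  refine StronglyMeasurable.integral_prod_right' (ν := volume)
    (f := fun x : (α × HR) × ℝ => Ψ x.1.1 x.2 • g (vmul (-x.2) x.1.2)) ?_
  exact (hΨ.comp (by fun_prop : Measurable fun x : (α × HR) × ℝ =>
    (x.1.1, x.2))).stronglyMeasurable.smul (hg.comp_measurable (measurable_vmul.comp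
      (by fun_prop : Measurable fun x : (α × HR) × ℝ => (-x.2, x.1.2))))

theorem eLpNorm_conv_le {p : ℝ≥0∞} (hp : 1 ≤ p) (hp_top : p ≠ ∞) (hψ : Measurable ψ)
    (hg : StronglyMeasurable g) :
    eLpNorm (conv ψ g) p ≤ (∫⁻ u, ‖ψ u‖ₑ) * eLpNorm g p := by
  have hG : StronglyMeasurable (uncurry fun (u : ℝ) (h : HR) => ψ u • g (vmul (-u) h)) :=
    (hψ.comp measurable_fst).stronglyMeasurable.smul (hg.comp_measurable
      (measurable_vmul.comp (measurable_fst.neg.prodMk measurable_snd)))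
  have hterm (u : ℝ) : eLpNorm (fun h => ψ u • g (vmul (-u) h)) p = ‖ψ u‖ₑ * eLpNorm g p := by
    rw [← eLpNorm_comp_measurePreserving hg.aestronglyMeasurable (measurePreserving_vmul (-u))]
    exact eLpNorm_const_smul (ψ u) (g ∘ vmul (-u)) p volume
  rw [← lintegral_mul_const _ hψ.enorm, funext (conv_eq ψ g)]
  exact (eLpNorm_integral_le hp hp_top hG).trans_eq (lintegral_congr hterm)

theorem integrable_smul_vmul (hψ : Integrable ψ) (hg : StronglyMeasurable g)
    (hM : ∀ h, ‖g h‖ ≤ M) (h : HR) : Integrable fun u => ψ u • g (vmul (-u) h) :=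
  hψ.smul_bdd M (hg.comp_measurable
    ((continuous_vmul h).comp continuous_neg).measurable).aestronglyMeasurable
    (.of_forall fun _ => hM _)

theorem norm_conv_le (hψ : Integrable ψ) (hM : ∀ h, ‖g h‖ ≤ M) (h : HR) :
    ‖conv ψ g h‖ ≤ (∫ u, ‖ψ u‖) * M := by
  rw [conv_eq, ← integral_mul_const]
  refine norm_integral_le_of_norm_le (hψ.norm.mul_const M) (.of_forall fun u => ?_)
  rw [norm_smul]
  gcongr
  exact hM _

theorem continuous_conv (hψ : Integrable ψ) (hg : Continuous g) (hM : ∀ h, ‖g h‖ ≤ M) :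
    Continuous (conv ψ g) := by
  rw [funext (conv_eq ψ g)]
  refine continuous_of_dominated (fun h => (integrable_smul_vmul hψ hg.stronglyMeasurable hM
    h).aestronglyMeasurable) (fun h => .of_forall fun u => ?_) (hψ.norm.mul_const M)
    (.of_forall fun u => by unfold vmul; fun_prop)
  rw [norm_smul]
  gcongr
  exact hM _

theorem conv_conv [CompleteSpace X] {φ : ℝ → ℝ} (hφ : Integrable φ) (hψ : Integrable ψ)
    (hg : StronglyMeasurable g) (hM : ∀ h, ‖g h‖ ≤ M) :
    conv φ (conv ψ g) = conv (φ ⋆[ContinuousLinearMap.mul ℝ ℝ] ψ) g := by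
  ext h
  have hinner (u : ℝ) : φ u • conv ψ g (vmul (-u) h) =
      ∫ w, (φ u * ψ (w - u)) • g (vmul (-w) h) := by
    rw [conv_eq, ← integral_smul,
      ← integral_sub_right_eq_self (fun v => φ u • ψ v • g (vmul (-v) (vmul (-u) h))) u]
    refine integral_congr_ae (.of_forall fun w => ?_)
    simp only [smul_smul, vmul]
    congr 4
    ring
  have hint : Integrable (uncurry fun u w : ℝ => (φ u * ψ (w - u)) • g (vmul (-w) h))
      (volume.prod volume) :=
    (hφ.convolution_integrand (ContinuousLinearMap.mul ℝ ℝ) hψ).swap.smul_bdd M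
      (hg.comp_measurable (measurable_vmul.comp
        (measurable_snd.neg.prodMk measurable_const))).aestronglyMeasurable
      (.of_forall fun _ => hM _)
  simp_rw [conv_eq φ, hinner]
  rw [integral_integral_swap hint, conv_eq]
  refine integral_congr_ae (.of_forall fun w => ?_)
  simp only [integral_smul_const]
  rfl

theorem hasFDerivAt_conv (hψ : Integrable ψ) (hg : ContDiff ℝ 1 g) (hgc : HasCompactSupport g)
    (h : HR) : HasFDerivAt (conv ψ g) (conv ψ (fderiv ℝ g) h) h := by
  have hg' : Continuous (fderiv ℝ g) := hg.continuous_fderiv one_ne_zero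
  obtain ⟨M, hM⟩ := hgc.exists_bound_of_continuous hg.continuous
  obtain ⟨M', hM'⟩ := (hgc.fderiv ℝ).exists_bound_of_continuous hg'
  have hint := integrable_smul_vmul hψ hg.continuous.stronglyMeasurable hM
  have hderiv (u : ℝ) (k : HR) : HasFDerivAt (fun k => ψ u • g (vmul (-u) k))
      (ψ u • fderiv ℝ g (vmul (-u) k)) k := by
    simp only [vmul_eq_add]
    exact (((hasFDerivAt_comp_add_right _).2
      (hg.differentiable one_ne_zero _).hasFDerivAt).const_smul (ψ u))
  rw [funext (conv_eq ψ g), conv_eq]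
  refine hasFDerivAt_integral_of_dominated_of_fderiv_le Filter.univ_mem
    (.of_forall fun k => (hint k).aestronglyMeasurable) (hint h)
    (integrable_smul_vmul hψ hg'.stronglyMeasurable hM' h).aestronglyMeasurable
    (.of_forall fun u k _ => ?_) (hψ.norm.mul_const M') (.of_forall fun u k _ => hderiv u k)
  rw [norm_smul]
  gcongr
  exact hM' _

theorem contDiff_one_conv (hψ : Integrable ψ) (hg : ContDiff ℝ 1 g) (hgc : HasCompactSupport g) :
    ContDiff ℝ 1 (conv ψ g) := by
  have hg' : Continuous (fderiv ℝ g) := hg.continuous_fderiv one_ne_zero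
  obtain ⟨M', hM'⟩ := (hgc.fderiv ℝ).exists_bound_of_continuous hg'
  have hderiv := hasFDerivAt_conv hψ hg hgc
  refine contDiff_one_iff_fderiv.2 ⟨fun h => (hderiv h).differentiableAt, ?_⟩
  rw [funext fun h => (hderiv h).fderiv]
  exact continuous_conv hψ hg' hM'

theorem fderiv_conv_apply (hψ : Integrable ψ) (hg : ContDiff ℝ 1 g)
    (hgc : HasCompactSupport g) (h v : HR) :
    fderiv ℝ (conv ψ g) h v = conv ψ (fun k => fderiv ℝ g k v) h := by
  have hg' : Continuous (fderiv ℝ g) := hg.continuous_fderiv one_ne_zero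
  obtain ⟨M', hM'⟩ := (hgc.fderiv ℝ).exists_bound_of_continuous hg'
  rw [(hasFDerivAt_conv hψ hg hgc h).fderiv, conv_eq, conv_eq, ContinuousLinearMap.integral_apply
    (integrable_smul_vmul hψ hg'.stronglyMeasurable hM' h)]
  rfl

theorem da_conv (hψ : Integrable ψ) (hg : ContDiff ℝ 1 g)
    (hgc : HasCompactSupport g) : da (conv ψ g) = conv ψ (da g) :=
  funext fun h => fderiv_conv_apply hψ hg hgc h _

theorem db_conv (hψ : Integrable ψ) (hg : ContDiff ℝ 1 g)
    (hgc : HasCompactSupport g) : db (conv ψ g) = conv ψ (db g) := by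
  ext h
  have hint (v : HR) : Integrable fun u => ψ u • fderiv ℝ g (vmul (-u) h) v := by
    have hg' : Continuous fun k => fderiv ℝ g k v :=
      (hg.continuous_fderiv one_ne_zero).clm_apply continuous_const
    obtain ⟨M', hM'⟩ := (hgc.fderiv_apply ℝ v).exists_bound_of_continuous hg'
    exact integrable_smul_vmul hψ hg'.stronglyMeasurable hM' h
  rw [db, fderiv_conv_apply hψ hg hgc, fderiv_conv_apply hψ hg hgc, conv_eq, conv_eq, conv_eq,
    ← integral_smul, ← integral_add (hint _) ((hint _).fun_smul h.1)]
  refine integral_congr_ae (.of_forall fun u => ?_)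
  simp only [db, vmul, smul_add, smul_comm h.1 (ψ u)]

end CentralConvolution

section HorizontalIncrements

open Function ENNReal

variable {X : Type*} [NormedAddCommGroup X] [NormedSpace ℝ X] {g : HR → X} {p : ℝ≥0∞}

theorem continuous_da (hg : ContDiff ℝ 1 g) : Continuous (da g) :=
  (hg.continuous_fderiv one_ne_zero).clm_apply continuous_const

theorem continuous_db (hg : ContDiff ℝ 1 g) : Continuous (db g) :=
  ((hg.continuous_fderiv one_ne_zero).clm_apply continuous_const).add
    (continuous_fst.smul ((hg.continuous_fderiv one_ne_zero).clm_apply continuous_const))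

theorem hasCompactSupport_da (hg : HasCompactSupport g) : HasCompactSupport (da g) :=
  hg.fderiv_apply ℝ _

theorem hasCompactSupport_db (hg : HasCompactSupport g) : HasCompactSupport (db g) :=
  (hg.fderiv_apply ℝ _).add ((hg.fderiv_apply ℝ _).smul_left)

theorem hasDerivAt_comp_rmul_da (hg : Differentiable ℝ g) (h : HR) (s : ℝ) :
    HasDerivAt (fun s => g (rmul (s, 0, 0) h)) (da g (rmul (s, 0, 0) h)) s := by
  have hcurve : HasDerivAt (fun s => rmul (s, 0, 0) h) ((1, 0, 0) : HR) s :=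
    ((hasDerivAt_id s).const_add h.1).prodMk
      ((hasDerivAt_const s (h.2.1 + 0)).prodMk (hasDerivAt_const s (h.2.2 + 0 + h.1 * 0)))
  exact (hg _).hasFDerivAt.comp_hasDerivAt s hcurve

theorem hasDerivAt_comp_rmul_db (hg : Differentiable ℝ g) (h : HR) (s : ℝ) :
    HasDerivAt (fun s => g (rmul (0, s, 0) h)) (db g (rmul (0, s, 0) h)) s := by
  have hcurve : HasDerivAt (fun s => rmul (0, s, 0) h)
      ((0, 1, 0) + h.1 • (0, 0, 1) : HR) s := by
    refine ((hasDerivAt_const s (h.1 + 0)).prodMk (((hasDerivAt_id s).const_add h.2.1).prodMk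
      (((hasDerivAt_id s).const_mul h.1).const_add (h.2.2 + 0)))).congr_deriv ?_
    simp
  refine ((hg _).hasFDerivAt.comp_hasDerivAt s hcurve).congr_deriv ?_
  simp only [map_add, map_smul, db, rmul, add_zero]

theorem eLpNorm_comp_rmul_sub_le_da [CompleteSpace X] (hp : 1 ≤ p) (hp_top : p ≠ ∞)
    (hg : ContDiff ℝ 1 g) {s : ℝ} (hs : 0 ≤ s) :
    eLpNorm (g ∘ rmul (s, 0, 0) - g) p ≤ ENNReal.ofReal s * eLpNorm (da g) p := by
  have hflow : Measurable (uncurry fun s : ℝ => rmul (s, 0, 0)) :=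
    measurable_rmul.comp ((measurable_fst.prodMk measurable_const).prodMk measurable_snd)
  refine eLpNorm_comp_flow_sub_le hp hp_top hflow (fun _ => measurePreserving_rmul _) rmul_zero
    (continuous_da hg).stronglyMeasurable
    (hasDerivAt_comp_rmul_da (hg.differentiable one_ne_zero)) (fun h => ?_) hs
  exact (continuous_da hg).comp (by unfold rmul; fun_prop)

theorem eLpNorm_comp_rmul_sub_le_db [CompleteSpace X] (hp : 1 ≤ p) (hp_top : p ≠ ∞)
    (hg : ContDiff ℝ 1 g) {s : ℝ} (hs : 0 ≤ s) :
    eLpNorm (g ∘ rmul (0, s, 0) - g) p ≤ ENNReal.ofReal s * eLpNorm (db g) p := by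
  have hflow : Measurable (uncurry fun s : ℝ => rmul (0, s, 0)) :=
    measurable_rmul.comp ((measurable_const.prodMk
      (measurable_fst.prodMk measurable_const)).prodMk measurable_snd)
  refine eLpNorm_comp_flow_sub_le hp hp_top hflow (fun _ => measurePreserving_rmul _) rmul_zero
    (continuous_db hg).stronglyMeasurable
    (hasDerivAt_comp_rmul_db (hg.differentiable one_ne_zero)) (fun h => ?_) hs
  exact (continuous_db hg).comp (by unfold rmul; fun_prop)

theorem eLpNorm_comp_vmul_sq_sub_le [CompleteSpace X] (hp : 1 ≤ p) (hp_top : p ≠ ∞)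
    (hg : ContDiff ℝ 1 g) {s : ℝ} (hs : 0 ≤ s) :
    eLpNorm (g ∘ vmul (s ^ 2) - g) p ≤
      ENNReal.ofReal s * (2 * (eLpNorm (da g) p + eLpNorm (db g) p)) := by
  have hinv (k l : HR) (hkl : rmul k l = 0) : LeftInverse (rmul k) (rmul l) := fun h => by
    rw [rmul_rmul, hkl, rmul_zero, id]
  have hcomm := eLpNorm_comp_commutator_sub_le hp hg.continuous.aestronglyMeasurable
    (measurePreserving_rmul (s, 0, 0)) (measurePreserving_rmul (0, s, 0))
    (measurePreserving_rmul (-s, 0, 0)) (measurePreserving_rmul (0, -s, 0))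
    (hinv _ _ (by simp [rmul])) (hinv _ _ (by simp [rmul]))
  rw [← vmul_sq_eq_commutator] at hcomm
  rw [mul_left_comm, mul_add]
  refine hcomm.trans ?_
  gcongr
  exacts [eLpNorm_comp_rmul_sub_le_da hp hp_top hg hs, eLpNorm_comp_rmul_sub_le_db hp hp_top hg hs]

theorem eLpNorm_comp_vmul_sub_le [CompleteSpace X] (hp : 1 ≤ p) (hp_top : p ≠ ∞)
    (hg : ContDiff ℝ 1 g) (u : ℝ) :
    eLpNorm (g ∘ vmul u - g) p ≤
      ENNReal.ofReal (|u| ^ (1 / 2 : ℝ)) * (2 * (eLpNorm (da g) p + eLpNorm (db g) p)) := by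
  have habs : eLpNorm (g ∘ vmul u - g) p = eLpNorm (g ∘ vmul |u| - g) p := by
    rcases abs_choice u with hu | hu <;> rw [hu]
    exact eLpNorm_comp_sub_eq_of_leftInverse hg.continuous.aestronglyMeasurable
      (measurePreserving_vmul u) (measurePreserving_vmul (-u)) fun h => by simp [vmul]
  rw [habs, ← Real.sqrt_eq_rpow]
  simpa only [Real.sq_sqrt (abs_nonneg u)] using
    eLpNorm_comp_vmul_sq_sub_le hp hp_top hg (Real.sqrt_nonneg |u|)

theorem conv_Pker_sub_eq_integral [CompleteSpace X] (hg : StronglyMeasurable g) {M : ℝ}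
    (hM : ∀ h, ‖g h‖ ≤ M) {t : ℝ} (ht : 0 < t) (h : HR) :
    (conv (Pker t) g - g) h = ∫ u, Pker t u • (g ∘ vmul (-u) - g) h := by
  have hP := integrable_Pker ht.le
  simp only [Pi.sub_apply, comp_apply, smul_sub]
  rw [integral_sub (integrable_smul_vmul hP hg hM h) (hP.smul_const _), integral_smul_const,
    integral_Pker ht, one_smul, conv_eq]

theorem eLpNorm_conv_Pker_sub_le [CompleteSpace X] (hp : 1 ≤ p) (hp_top : p ≠ ∞)
    (hg : StronglyMeasurable g) {M : ℝ} (hM : ∀ h, ‖g h‖ ≤ M) {α : ℝ} (hα : 0 ≤ α) (hα_lt : α < 1)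
    {L : ℝ≥0∞} (hL : ∀ u, eLpNorm (g ∘ vmul u - g) p ≤ ENNReal.ofReal (|u| ^ α) * L)
    {t : ℝ} (ht : 0 < t) :
    eLpNorm (conv (Pker t) g - g) p ≤ ENNReal.ofReal (t ^ α * poissonMoment α) * L := by
  have hG : StronglyMeasurable (uncurry fun (u : ℝ) (h : HR) =>
      (Pker t u • (g ∘ vmul (-u) - g)) h) :=
    ((continuous_Pker ht).measurable.comp measurable_fst).stronglyMeasurable.smul
      ((hg.comp_measurable (measurable_vmul.comp
        (measurable_fst.neg.prodMk measurable_snd))).sub (hg.comp_measurable measurable_snd))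
  have hterm (u : ℝ) : eLpNorm (Pker t u • (g ∘ vmul (-u) - g)) p ≤
      ENNReal.ofReal (Pker t u * |u| ^ α) * L := by
    rw [eLpNorm_const_smul, Real.enorm_of_nonneg (Pker_pos ht u).le,
      ENNReal.ofReal_mul (Pker_pos ht u).le, mul_assoc, ← abs_neg u]
    gcongr
    exact hL (-u)
  have hmeas : Measurable fun u => ENNReal.ofReal (Pker t u * |u| ^ α) :=
    ((continuous_Pker ht).measurable.mul (measurable_id.abs.pow_const α)).ennreal_ofReal
  rw [← lintegral_Pker_mul_rpow hα hα_lt ht, ← lintegral_mul_const _ hmeas,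
    funext (conv_Pker_sub_eq_integral hg hM ht)]
  exact (eLpNorm_integral_le hp hp_top hG).trans (lintegral_mono hterm)

end HorizontalIncrements

section DyadicScales

open ENNReal Filter Topology

variable {X : Type*} [NormedAddCommGroup X] [NormedSpace ℝ X] {g f : HR → X} {p : ℝ≥0∞}
  {s t M : ℝ}

theorem conv_Pker_conv_Qker [CompleteSpace X] (hs : 0 < s) (ht : 0 < t) (hg : StronglyMeasurable g)
    (hM : ∀ h, ‖g h‖ ≤ M) : conv (Pker s) (conv (Qker t) g) = conv (Qker (s + t)) g := by
  rw [conv_conv (integrable_Pker hs.le) (integrable_Qker ht) hg hM]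
  exact congrArg (conv · g) (funext (integral_Pker_mul_Qker hs ht))

theorem eLpNorm_conv_Qker_le (hp : 1 ≤ p) (hp_top : p ≠ ∞) (hg : StronglyMeasurable g)
    (ht : 0 < t) : eLpNorm (conv (Qker t) g) p ≤ ENNReal.ofReal t⁻¹ * eLpNorm g p :=
  (eLpNorm_conv_le hp hp_top (continuous_Qker ht).measurable hg).trans
    (mul_le_mul_left (lintegral_enorm_Qker_le ht) _)

theorem tendsto_eLpNorm_conv_Qker (hp : 1 ≤ p) (hp_top : p ≠ ∞) (hg : StronglyMeasurable g)
    (hgp : MemLp g p) : Tendsto (fun t => eLpNorm (conv (Qker t) g) p) atTop (𝓝 0) := by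
  have hdecay : Tendsto (fun t : ℝ => ENNReal.ofReal t⁻¹ * eLpNorm g p) atTop (𝓝 0) := by
    simpa using ENNReal.Tendsto.mul_const
      (ENNReal.tendsto_ofReal (tendsto_inv_atTop_zero (𝕜 := ℝ))) (.inr hgp.2.ne)
  refine tendsto_of_tendsto_of_tendsto_of_le_of_le' tendsto_const_nhds hdecay
    (.of_forall fun _ => zero_le) ?_
  filter_upwards [eventually_gt_atTop 0] with t ht using eLpNorm_conv_Qker_le hp hp_top hg ht

theorem memLp_conv_Qker (hp : 1 ≤ p) (hp_top : p ≠ ∞) (hg : Continuous g)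
    (hgc : HasCompactSupport g) (ht : 0 < t) : MemLp (conv (Qker t) g) p := by
  obtain ⟨M, hM⟩ := hgc.exists_bound_of_continuous hg
  refine ⟨(continuous_conv (integrable_Qker ht) hg hM).aestronglyMeasurable,
    (eLpNorm_conv_Qker_le hp hp_top hg.stronglyMeasurable ht).trans_lt ?_⟩
  exact ENNReal.mul_lt_top ofReal_lt_top (hg.memLp_of_hasCompactSupport hgc).2

theorem measurable_eLpNorm_conv_Qker (hp : p ≠ 0) (hp_top : p ≠ ∞) (hg : StronglyMeasurable g) :
    Measurable fun t => eLpNorm (conv (Qker t) g) p := by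
  simp only [eLpNorm_eq_lintegral_rpow_enorm_toReal hp hp_top]
  exact ((stronglyMeasurable_uncurry_conv measurable_Qker hg).enorm.pow_const
    p.toReal).lintegral_prod_right'.pow_const _

/-- `‖Q_t * ∂_a f‖_p + ‖Q_t * ∂_b f‖_p`, which is comparable to the norm of `Q_t * ∇_ℍ f` in
`L_p(ℍ(ℝ), ℓ_p²(X))` up to a factor `2`. -/
noncomputable def horizontalNorm (p : ℝ≥0∞) (f : HR → X) (t : ℝ) : ℝ≥0∞ :=
  eLpNorm (conv (Qker t) (da f)) p + eLpNorm (conv (Qker t) (db f)) p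

theorem measurable_horizontalNorm (hp : p ≠ 0) (hp_top : p ≠ ∞) (hf : ContDiff ℝ 1 f) :
    Measurable (horizontalNorm p f) :=
  (measurable_eLpNorm_conv_Qker hp hp_top (continuous_da hf).stronglyMeasurable).add
    (measurable_eLpNorm_conv_Qker hp hp_top (continuous_db hf).stronglyMeasurable)

theorem eLpNorm_conv_Qker_le_two_mul_add [CompleteSpace X] (hp : 1 ≤ p) (hp_top : p ≠ ∞)
    (hf : ContDiff ℝ 1 f) (hfc : HasCompactSupport f) (ht : 0 < t) :
    eLpNorm (conv (Qker t) f) p ≤ eLpNorm (conv (Qker (2 * t)) f) p +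
      ENNReal.ofReal (t ^ (1 / 2 : ℝ) * poissonMoment (1 / 2)) * (2 * horizontalNorm p f t) := by
  obtain ⟨M, hM⟩ := hfc.exists_bound_of_continuous hf.continuous
  have hQ := integrable_Qker ht
  have hQf : ContDiff ℝ 1 (conv (Qker t) f) := contDiff_one_conv hQ hf hfc
  have hQM := norm_conv_le hQ hM
  have hPQf := (continuous_conv (integrable_Pker ht.le) hQf.continuous hQM).aestronglyMeasurable
    (μ := volume)
  have hincr : eLpNorm (conv (Pker t) (conv (Qker t) f) - conv (Qker t) f) p ≤
      ENNReal.ofReal (t ^ (1 / 2 : ℝ) * poissonMoment (1 / 2)) * (2 * horizontalNorm p f t) := by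
    rw [horizontalNorm, ← da_conv hQ hf hfc, ← db_conv hQ hf hfc]
    exact eLpNorm_conv_Pker_sub_le hp hp_top hQf.continuous.stronglyMeasurable hQM (by norm_num)
      (by norm_num) (eLpNorm_comp_vmul_sub_le hp hp_top hQf) ht
  rw [eLpNorm_sub_comm] at hincr
  rw [two_mul, ← conv_Pker_conv_Qker ht ht hf.continuous.stronglyMeasurable hM]
  calc eLpNorm (conv (Qker t) f) p volume
      = eLpNorm (conv (Pker t) (conv (Qker t) f) +
          (conv (Qker t) f - conv (Pker t) (conv (Qker t) f))) p volume := by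
        rw [add_sub_cancel]
    _ ≤ _ := eLpNorm_add_le hPQf (hQf.continuous.aestronglyMeasurable.sub hPQf) hp
    _ ≤ _ := by gcongr

end DyadicScales

section IncrementEstimate

open Set ENNReal

variable {X : Type*} [NormedAddCommGroup X] [NormedSpace ℝ X]

/-- The constant of the increment estimate: `poissonMoment (1 / 2)` comes from averaging central
increments against the Poisson kernel, `2` from the commutator, and `(1 - 2 ^ (-1 / 2))⁻¹` from
summing over dyadic scales. -/
noncomputable def incrementConst : ℝ := 2 * (1 - 2 ^ (-(1 / 2) : ℝ))⁻¹ * poissonMoment (1 / 2)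

theorem incrementConst_pos : 0 < incrementConst := by
  have hratio : (2 : ℝ) ^ (-(1 / 2) : ℝ) < 1 :=
    Real.rpow_lt_one_of_one_lt_of_neg one_lt_two (by norm_num)
  exact mul_pos (mul_pos two_pos (inv_pos.2 (sub_pos.2 hratio)))
    (poissonMoment_pos (by norm_num) (by norm_num))

theorem ofReal_incrementConst : ENNReal.ofReal incrementConst =
    ENNReal.ofReal (1 - 2 ^ (-(1 / 2) : ℝ))⁻¹ * (ENNReal.ofReal (poissonMoment (1 / 2)) * 2) := by
  have hmoment : 0 < poissonMoment (1 / 2) := poissonMoment_pos (by norm_num) (by norm_num)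
  rw [incrementConst, ENNReal.ofReal_mul' hmoment.le, ENNReal.ofReal_mul zero_le_two,
    ENNReal.ofReal_ofNat]
  ring

theorem lintegral_eLpNorm_conv_Qker_le [CompleteSpace X] {p : ℝ≥0∞} (hp : 1 ≤ p) (hp_top : p ≠ ∞)
    {q : ℝ} (hq : 1 ≤ q) {f : HR → X} (hf : ContDiff ℝ 1 f) (hfc : HasCompactSupport f) :
    (∫⁻ t in Ioi 0, ENNReal.ofReal (t ^ (q / 2 - 1)) * eLpNorm (conv (Qker t) f) p ^ q) ^
        (1 / q) ≤
      ENNReal.ofReal incrementConst *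
        (∫⁻ t in Ioi 0, ENNReal.ofReal (t ^ (q - 1)) * horizontalNorm p f t ^ q) ^ (1 / q) := by
  have hq0 : 0 < q := one_pos.trans_le hq
  let c : ℝ≥0∞ := ENNReal.ofReal (poissonMoment (1 / 2)) * 2
  let E : ℝ → ℝ≥0∞ := fun t => ENNReal.ofReal (t ^ (1 / 2 : ℝ)) * (c * horizontalNorm p f t)
  have hE : Measurable E := by
    have := measurable_horizontalNorm (one_pos.trans_le hp).ne' hp_top hf
    fun_prop
  have hscale (t : ℝ) (ht : 0 < t) :
      eLpNorm (conv (Qker t) f) p ≤ eLpNorm (conv (Qker (2 * t)) f) p + E t := by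
    simpa only [E, c, ENNReal.ofReal_mul (Real.rpow_nonneg ht.le (1 / 2)), mul_assoc] using
      eLpNorm_conv_Qker_le_two_mul_add hp hp_top hf hfc ht
  have htelescope (t : ℝ) (ht : 0 < t) :
      eLpNorm (conv (Qker t) f) p ≤ ∑' k : ℕ, E (2 ^ k * t) :=
    le_tsum_of_le_comp_mul_add one_lt_two hscale
      (tendsto_eLpNorm_conv_Qker hp hp_top hf.continuous.stronglyMeasurable
        (hf.continuous.memLp_of_hasCompactSupport hfc)) ht
  have hweight (t : ℝ) (ht : 0 < t) : ENNReal.ofReal (t ^ (1 / 2 * q - 1)) * E t ^ q =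
      ENNReal.ofReal (t ^ (q - 1)) * (c * horizontalNorm p f t) ^ q := by
    rw [ENNReal.mul_rpow_of_nonneg _ _ hq0.le, ← mul_assoc,
      ENNReal.ofReal_rpow_of_nonneg (by positivity) hq0.le, ← ENNReal.ofReal_mul (by positivity),
      ← Real.rpow_mul ht.le, ← Real.rpow_add ht]
    ring_nf
  calc _ ≤ (∫⁻ t in Ioi 0, ENNReal.ofReal (t ^ (1 / 2 * q - 1)) *
          (∑' k : ℕ, E (2 ^ k * t)) ^ q) ^ (1 / q) := by
        rw [← one_div_mul_eq_div]
        refine ENNReal.rpow_le_rpow (setLIntegral_mono' measurableSet_Ioi fun t ht => ?_)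
          (by positivity)
        gcongr
        exact htelescope t ht
    _ ≤ ENNReal.ofReal (1 - 2 ^ (-(1 / 2) : ℝ))⁻¹ * (∫⁻ t in Ioi 0,
          ENNReal.ofReal (t ^ (1 / 2 * q - 1)) * E t ^ q) ^ (1 / q) :=
        lintegral_Ioi_rpow_mul_tsum_comp_pow_mul_le hE one_half_pos one_lt_two hq
    _ = _ := by
        rw [setLIntegral_congr_fun measurableSet_Ioi hweight, lintegral_mul_const_mul_rpow hq0
          (ENNReal.mul_ne_top ofReal_ne_top ofNat_ne_top), ← mul_assoc, ofReal_incrementConst]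

end IncrementEstimate

end HR

open HR in
theorem integrated_increment_lemma_general {p q : ℝ} (hp : 1 ≤ p) (hq : 1 ≤ q) {X : Type*}
    [NormedAddCommGroup X] [NormedSpace ℝ X] [CompleteSpace X] {f : HR → X}
    (hf : ContDiff ℝ 1 f) (hfc : HasCompactSupport f) :
    (∫⁻ t in Set.Ioi (0 : ℝ),
        ENNReal.ofReal
          (t ^ (q / 2 - 1) * ((∫ h : HR, ‖conv (Qker t) f h‖ ^ p) ^ (1 / p)) ^ q)) ^ (1 / q) ≤
      ENNReal.ofReal (2 * incrementConst) *
        (∫⁻ t in Set.Ioi (0 : ℝ),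
          ENNReal.ofReal
            (t ^ (q - 1) *
              ((∫ h : HR, (‖conv (Qker t) (da f) h‖ ^ p + ‖conv (Qker t) (db f) h‖ ^ p))
                ^ (1 / p)) ^ q)) ^ (1 / q) := by
  have hp0 : 0 < p := one_pos.trans_le hp
  have hq0 : 0 < q := one_pos.trans_le hq
  have hp1 : 1 ≤ ENNReal.ofReal p := ENNReal.one_le_ofReal.2 hp
  have hmem {t : ℝ} (ht : 0 < t) {g : HR → X} (hg : Continuous g) (hgc : HasCompactSupport g) :
      MemLp (conv (Qker t) g) (.ofReal p) :=
    memLp_conv_Qker hp1 ENNReal.ofReal_ne_top hg hgc ht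
  have hgrad (t : ℝ) (ht : 0 < t) : horizontalNorm (.ofReal p) f t ≤ 2 * ENNReal.ofReal
      ((∫ h, (‖conv (Qker t) (da f) h‖ ^ p + ‖conv (Qker t) (db f) h‖ ^ p)) ^ (1 / p)) :=
    eLpNorm_ofReal_add_le_ofReal_integral hp0
      (hmem ht (continuous_da hf) (hasCompactSupport_da hfc))
      (hmem ht (continuous_db hf) (hasCompactSupport_db hfc))
  rw [setLIntegral_Ioi_ofReal_rpow_mul_rpow hq0.le fun t => by positivity,
    setLIntegral_Ioi_ofReal_rpow_mul_rpow hq0.le fun t => by positivity,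
    mul_comm 2, ENNReal.ofReal_mul incrementConst_pos.le, ENNReal.ofReal_ofNat, mul_assoc,
    ← lintegral_mul_const_mul_rpow hq0 ENNReal.ofNat_ne_top,
    setLIntegral_congr_fun measurableSet_Ioi fun t ht => by
      rw [← eLpNorm_ofReal_eq_ofReal_integral hp0 (hmem ht hf.continuous hfc)]]
  refine (lintegral_eLpNorm_conv_Qker_le hp1 ENNReal.ofReal_ne_top hq hf hfc).trans ?_
  gcongr ENNReal.ofReal incrementConst * ?_ ^ (1 / q)
  refine setLIntegral_mono' measurableSet_Ioi fun t ht => ?_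
  gcongr
  exact hgrad t ht

open HR in
/-- Lemma 2.5: the integrated increment estimate. -/
theorem integrated_increment_lemma :
    ∃ C : ℝ, 0 < C ∧
      ∀ p q : ℝ, 1 ≤ p → 1 ≤ q →
        ∀ (X : Type) [NormedAddCommGroup X] [NormedSpace ℝ X] [CompleteSpace X],
          ∀ f : HR → X, ContDiff ℝ (⊤ : ℕ∞) f → HasCompactSupport f →
            (∫⁻ t in Set.Ioi (0 : ℝ),
                ENNReal.ofReal
                  (t ^ (q / 2 - 1) *
                    ((∫ h : HR, ‖conv (Qker t) f h‖ ^ p) ^ (1 / p)) ^ q)) ^ (1 / q) ≤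
              ENNReal.ofReal C *
                (∫⁻ t in Set.Ioi (0 : ℝ),
                  ENNReal.ofReal
                    (t ^ (q - 1) *
                      ((∫ h : HR, (‖conv (Qker t) (da f) h‖ ^ p + ‖conv (Qker t) (db f) h‖ ^ p))
                          ^ (1 / p)) ^ q)) ^ (1 / q) := by
  refine ⟨2 * incrementConst, mul_pos two_pos incrementConst_pos, ?_⟩
  intro p q hp hq X _ _ _ f hf hfc
  exact integrated_increment_lemma_general hp hq (hf.of_le (by exact_mod_cast le_top)) hfc
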